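/- Let n ≥ 2, let u_1,…,u_n ∈ ℝ^d, set ū = (1/n)∑_{i=1}^n u_i and σ² = (1/n)∑_{i=1}^n ‖u_i − ū‖², and suppose σ² ≥ c² for some c ≥ 0. For 1 ≤ k ≤ (n+1)/2, let S be a uniformly random k-element subset of {1,…,n}. Then E[‖(1/k)∑_{i∈S} u_i‖²] ≥ c²/(2k). -/

import Mathlib

/-!
Expanding `‖∑ i ∈ S, u i‖ ^ 2` as a double sum of inner products and summing over all `k`-subsets
`S`, each inner product `⟪u i, u j⟫` is weighted by the number of `S` containing both `i` and `j`.
That number is `a = (n - 1).choose (k - 1)` if `i = j` and a common value `b` otherwise, and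
`a - b = (n - 2).choose (k - 1)` by Pascal's rule. Hence the sum over `S` is
`(a - b) * ∑ i, ‖u i‖ ^ 2 + b * ‖∑ i, u i‖ ^ 2` (`sum_sq_norm_powersetCard`).
As `∑ i, ‖u i‖ ^ 2 ≥ n σ²` (`sum_sq_norm_sub_mean_le`), the expectation is at least
`(a - b) n σ² / (k² n.choose k) = (n - k) / (n - 1) * σ² / k`,
and `(n - k) / (n - 1) ≥ 1 / 2` is the condition `k ≤ (n + 1) / 2`.
-/

/-- With `n = m + 2` and `k = l + 1`: the number `b` of `k`-subsets containing a given pair of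
distinct points does not depend on the pair. Its value is characterised through Pascal's rule
rather than as `m.choose (l - 1)`, which is wrong for `l = 0`, where no such subset exists. -/
lemma exists_pair_count (m l : ℕ) : ∃ b : ℕ, (m + 1).choose l = b + m.choose l ∧
    ∀ i j : Fin (m + 2), i ≠ j →
      ((Finset.powersetCard (l + 1) (Finset.univ : Finset (Fin (m + 2)))).filter
        (fun S => i ∈ S ∧ j ∈ S)).card = b := by
  rcases l with _ | p
  · refine ⟨0, by simp, fun i j hij => ?_⟩
    rw [Finset.card_eq_zero, Finset.filter_eq_empty_iff]
    rintro S hS ⟨hi, hj⟩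
    have hc := (Finset.mem_powersetCard.1 hS).2
    exact hij (Finset.card_le_one.1 hc.le i hi j hj)
  · refine ⟨m.choose p, Nat.choose_succ_succ m p, fun i j hij => ?_⟩
    have h := Finset.card_filter_powersetCard_subset ({i, j} : Finset (Fin (m + 2)))
      Finset.univ (p + 1 + 1) (Finset.subset_univ _) (by rw [Finset.card_pair hij]; omega)
    rw [Finset.card_pair hij, Finset.card_univ, Fintype.card_fin] at h
    simpa [Finset.insert_subset_iff] using h

lemma single_count (m l : ℕ) (i : Fin (m + 2)) :
    ((Finset.powersetCard (l + 1) (Finset.univ : Finset (Fin (m + 2)))).filter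
      (fun S => i ∈ S)).card = (m + 1).choose l := by
  have h := Finset.card_filter_powersetCard_subset ({i} : Finset (Fin (m + 2)))
    Finset.univ (l + 1) (Finset.subset_univ _) (by simp)
  simpa using h

lemma sq_norm_sum_eq {E ι : Type*} [NormedAddCommGroup E] [InnerProductSpace ℝ E]
    (S : Finset ι) (u : ι → E) :
    ‖∑ i ∈ S, u i‖ ^ 2 = ∑ i ∈ S, ∑ j ∈ S, inner ℝ (u i) (u j) := by
  rw [← real_inner_self_eq_norm_sq, sum_inner]
  simp_rw [inner_sum]

/-- The second moment of a sum sampled without replacement, for `n = m + 2` and `k = l + 1`. -/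
lemma sum_sq_norm_powersetCard {E : Type*} [NormedAddCommGroup E] [InnerProductSpace ℝ E]
    (m l : ℕ) (u : Fin (m + 2) → E) :
    ∃ b : ℕ, ∑ S ∈ Finset.powersetCard (l + 1) (Finset.univ : Finset (Fin (m + 2))),
        ‖∑ i ∈ S, u i‖ ^ 2
      = (m.choose l : ℝ) * ∑ i, ‖u i‖ ^ 2 + b * ‖∑ i, u i‖ ^ 2 := by
  obtain ⟨b, hab, hb⟩ := exists_pair_count m l
  refine ⟨b, ?_⟩
  have expand : ∀ S : Finset (Fin (m + 2)), ‖∑ i ∈ S, u i‖ ^ 2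
      = ∑ i, ∑ j, if i ∈ S ∧ j ∈ S then inner ℝ (u i) (u j) else 0 := by
    intro S
    simp [sq_norm_sum_eq, ite_and]
  have swap : ∑ S ∈ Finset.powersetCard (l + 1) (Finset.univ : Finset (Fin (m + 2))),
        ‖∑ i ∈ S, u i‖ ^ 2
      = ∑ i, ∑ j, (((Finset.powersetCard (l + 1) (Finset.univ : Finset (Fin (m + 2)))).filter
        (fun S => i ∈ S ∧ j ∈ S)).card : ℝ) * inner ℝ (u i) (u j) := by
    simp_rw [expand]
    rw [Finset.sum_comm]
    refine Finset.sum_congr rfl fun i _ => ?_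
    rw [Finset.sum_comm]
    refine Finset.sum_congr rfl fun j _ => ?_
    rw [← Finset.sum_filter, Finset.sum_const, nsmul_eq_mul]
  rw [swap, sq_norm_sum_eq, Finset.mul_sum, Finset.mul_sum, ← Finset.sum_add_distrib]
  refine Finset.sum_congr rfl fun i _ => ?_
  have weight : ∀ j, (((Finset.powersetCard (l + 1)
        (Finset.univ : Finset (Fin (m + 2)))).filter (fun S => i ∈ S ∧ j ∈ S)).card : ℝ)
        * inner ℝ (u i) (u j)
      = (if i = j then (m.choose l : ℝ) * inner ℝ (u i) (u j) else 0)
        + b * inner ℝ (u i) (u j) := by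
    intro j
    split_ifs with h
    · subst h
      simp only [and_self]
      rw [single_count, hab]
      push_cast
      ring
    · rw [hb i j h, zero_add]
  simp_rw [weight]
  rw [Finset.sum_add_distrib, Finset.sum_ite_eq, if_pos (Finset.mem_univ _),
    real_inner_self_eq_norm_sq, Finset.mul_sum]

lemma sum_sq_norm_sub_mean_le {E : Type*} [NormedAddCommGroup E] [InnerProductSpace ℝ E]
    {n : ℕ} (hn : 0 < n) (u : Fin n → E) :
    ∑ i, ‖u i - (n : ℝ)⁻¹ • ∑ j, u j‖ ^ 2 ≤ ∑ i, ‖u i‖ ^ 2 := by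
  have hn' : (0 : ℝ) < n := by exact_mod_cast hn
  simp_rw [norm_sub_sq_real, inner_smul_right, norm_smul, mul_pow]
  rw [Finset.sum_add_distrib, Finset.sum_sub_distrib, ← Finset.mul_sum, ← Finset.mul_sum,
    ← sum_inner, real_inner_self_eq_norm_sq]
  simp only [Finset.sum_const, Finset.card_univ, Fintype.card_fin, nsmul_eq_mul, norm_inv,
    Real.norm_natCast]
  have h : (n : ℝ) * ((n : ℝ)⁻¹ ^ 2 * ‖∑ j, u j‖ ^ 2) = (n : ℝ)⁻¹ * ‖∑ j, u j‖ ^ 2 := by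
    field_simp
  have h0 : 0 ≤ (n : ℝ)⁻¹ * ‖∑ j, u j‖ ^ 2 := by positivity
  linarith

theorem stmt6 {d : ℕ} {n k : ℕ} (hn : 2 ≤ n) (hk1 : 1 ≤ k)
    (u : Fin n → EuclideanSpace ℝ (Fin d)) (c : ℝ) (hc : 0 ≤ c)
    (hσ : c ^ 2 ≤ ((n : ℝ))⁻¹ * ∑ i, ‖u i - (n : ℝ)⁻¹ • ∑ j, u j‖ ^ 2)
    (hk2 : (k : ℝ) ≤ ((n : ℝ) + 1) / 2) :
    c ^ 2 / (2 * (k : ℝ))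
      ≤ ((n.choose k : ℝ))⁻¹ *
          ∑ S ∈ Finset.powersetCard k (Finset.univ : Finset (Fin n)),
            ‖(k : ℝ)⁻¹ • ∑ i ∈ S, u i‖ ^ 2 := by
  obtain ⟨m, rfl⟩ : ∃ m, n = m + 2 := ⟨n - 2, by omega⟩
  obtain ⟨l, rfl⟩ : ∃ l, k = l + 1 := ⟨k - 1, by omega⟩
  have hlm : 2 * l ≤ m + 1 := by
    have : (2 * l : ℝ) ≤ m + 1 := by push_cast at hk2; linarith
    exact_mod_cast this
  obtain ⟨b, hb⟩ := sum_sq_norm_powersetCard m l u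
  have hQ : ((m + 2 : ℕ) : ℝ) * c ^ 2 ≤ ∑ i, ‖u i‖ ^ 2 := by
    refine le_trans ?_ (sum_sq_norm_sub_mean_le (by omega) u)
    rwa [inv_mul_eq_div, le_div_iff₀ (by positivity), mul_comm] at hσ
  have hT : (m.choose l : ℝ) * (((m + 2 : ℕ) : ℝ) * c ^ 2)
      ≤ ∑ S ∈ Finset.powersetCard (l + 1) (Finset.univ : Finset (Fin (m + 2))),
        ‖∑ i ∈ S, u i‖ ^ 2 := by
    rw [hb]
    have h1 := mul_le_mul_of_nonneg_left hQ (Nat.cast_nonneg (α := ℝ) (m.choose l))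
    have h2 : 0 ≤ (b : ℝ) * ‖∑ i, u i‖ ^ 2 := by positivity
    linarith
  have hC : (0 : ℝ) < ((m + 2).choose (l + 1) : ℕ) := by
    exact_mod_cast Nat.choose_pos (by omega)
  -- `n.choose k = n (n - 1) / (k (n - k)) * (n - 2).choose (k - 1)`, and `n - 1 ≤ 2 (n - k)`.
  have hchoose : ((m + 2).choose (l + 1) : ℝ) * (l + 1) ≤ 2 * ((m + 2) * (m.choose l : ℝ)) := by
    have h1 := Nat.add_one_mul_choose_eq (m + 1) l
    have h2 := Nat.choose_mul_succ_eq m l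
    have h3 : (m + 1).choose l ≤ 2 * m.choose l := by
      have h4 : (m + 1).choose l * (m + 1) ≤ (2 * m.choose l) * (m + 1) := by
        calc (m + 1).choose l * (m + 1) ≤ (m + 1).choose l * (2 * (m + 1 - l)) :=
              Nat.mul_le_mul_left _ (by omega)
          _ = (2 * m.choose l) * (m + 1) := by rw [mul_assoc 2, h2]; ring
      exact Nat.le_of_mul_le_mul_right h4 (by omega)
    have h5 : (m + 2).choose (l + 1) * (l + 1) ≤ 2 * ((m + 2) * m.choose l) := by
      calc (m + 2).choose (l + 1) * (l + 1) = (m + 2) * (m + 1).choose l := h1.symm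
        _ ≤ (m + 2) * (2 * m.choose l) := Nat.mul_le_mul_left _ h3
        _ = _ := by ring
    exact_mod_cast h5
  simp_rw [norm_smul, mul_pow]
  rw [← Finset.mul_sum, norm_inv, Real.norm_natCast, inv_mul_eq_div, le_div_iff₀ hC]
  refine le_trans ?_ (mul_le_mul_of_nonneg_left hT (by positivity))
  push_cast
  have hl : (0 : ℝ) < l + 1 := by positivity
  have key := mul_le_mul_of_nonneg_right hchoose (sq_nonneg c)
  calc c ^ 2 / (2 * ((l : ℝ) + 1)) * ((m + 2).choose (l + 1) : ℝ)
      = ((l : ℝ) + 1)⁻¹ ^ 2 * (((m + 2).choose (l + 1) : ℝ) * (l + 1) * c ^ 2 / 2) := by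
        field_simp
    _ ≤ ((l : ℝ) + 1)⁻¹ ^ 2 * ((m.choose l : ℝ) * (((m : ℝ) + 2) * c ^ 2)) := by
        refine mul_le_mul_of_nonneg_left ?_ (by positivity)
        linarith
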